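/- Let S be an ordered semigroup with real multiplication satisfying axioms O1–O6 and having a countable dense subset. Then every pair of elements f, g ∈ S has a greatest lower bound f ∧ g in S. -/

import Mathlib

open scoped ENNReal

/-- `CC s t` : `s` is (sequentially) compactly contained in `t`, written `s ≪ t`. -/
def CC {S : Type*} [AddCommMonoid S] [PartialOrder S] (s t : S) : Prop :=
  ∀ u : ℕ → S, Monotone u → ∀ x : S, IsLUB (Set.range u) x → t ≤ x → ∃ n, s ≤ u n

/-- An ordered semigroup (positive, with translation invariant order) satisfying axioms O1-O5. -/
structure CuO5 (S : Type*) [AddCommMonoid S] [PartialOrder S] : Prop where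
  addRightMono : ∀ {s t : S}, s ≤ t → ∀ r : S, s + r ≤ t + r
  zeroLe : ∀ s : S, 0 ≤ s
  O1 : ∀ u : ℕ → S, Monotone u → ∃ x : S, IsLUB (Set.range u) x
  O2 : ∀ s : S, ∃ u : ℕ → S, (∀ n, CC (u n) (u (n + 1))) ∧ IsLUB (Set.range u) s
  O3 : ∀ {s₁ t₁ s₂ t₂ : S}, CC s₁ t₁ → CC s₂ t₂ → CC (s₁ + s₂) (t₁ + t₂)
  O4 : ∀ u v : ℕ → S, Monotone u → Monotone v → ∀ x y : S,
    IsLUB (Set.range u) x → IsLUB (Set.range v) y →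
    IsLUB (Set.range fun n => u n + v n) (x + y)
  O5 : ∀ {s' s t : S}, CC s' s → s ≤ t → ∃ r : S, s' + r ≤ t ∧ t ≤ s + r

/-- Axioms O1-O6. -/
structure CuO6 (S : Type*) [AddCommMonoid S] [PartialOrder S] extends CuO5 S : Prop where
  O6 : ∀ {s r t : S}, s ≤ r + t → ∀ {s' : S}, CC s' s →
    ∃ r' t' : S, s' ≤ r' + t' ∧ r' ≤ r ∧ r' ≤ s ∧ t' ≤ t ∧ t' ≤ s

/-- A functional on `S`: additive, order preserving, zero preserving map to `[0,∞]`
preserving suprema of increasing sequences. -/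
structure IsFunctional {S : Type*} [AddCommMonoid S] [PartialOrder S] (l : S → ℝ≥0∞) : Prop where
  map_zero : l 0 = 0
  map_add : ∀ s t : S, l (s + t) = l s + l t
  mono : ∀ {s t : S}, s ≤ t → l s ≤ l t
  map_sup : ∀ u : ℕ → S, Monotone u → ∀ x : S, IsLUB (Set.range u) x → l x = ⨆ n, l (u n)

/-- Real multiplication on `S` : a map `(0,∞] × S → S` additive, order preserving and
sup-(of increasing sequences)-preserving in each variable, with `1 · s = s`.
Scalars are elements of `ℝ≥0∞` required to be positive. -/
structure RealMul (S : Type*) [AddCommMonoid S] [PartialOrder S] where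
  smul : ℝ≥0∞ → S → S
  add_left : ∀ {a b : ℝ≥0∞}, 0 < a → 0 < b → ∀ s : S, smul (a + b) s = smul a s + smul b s
  add_right : ∀ {a : ℝ≥0∞}, 0 < a → ∀ s t : S, smul a (s + t) = smul a s + smul a t
  mono_left : ∀ {a b : ℝ≥0∞}, 0 < a → a ≤ b → ∀ s : S, smul a s ≤ smul b s
  mono_right : ∀ {a : ℝ≥0∞}, 0 < a → ∀ {s t : S}, s ≤ t → smul a s ≤ smul a t
  sup_left : ∀ u : ℕ → ℝ≥0∞, Monotone u → 0 < u 0 → ∀ s : S,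
    IsLUB (Set.range fun n => smul (u n) s) (smul (⨆ n, u n) s)
  sup_right : ∀ {a : ℝ≥0∞}, 0 < a → ∀ u : ℕ → S, Monotone u → ∀ x : S,
    IsLUB (Set.range u) x → IsLUB (Set.range fun n => smul a (u n)) (smul a x)
  one_smul : ∀ s : S, smul 1 s = s

/-- `D` is a dense subset of `S`: every element of `S` is the supremum of a rapidly
increasing sequence of elements of `D`. -/
def IsDenseSub {S : Type*} [AddCommMonoid S] [PartialOrder S] (D : Set S) : Prop :=
  ∀ s : S, ∃ u : ℕ → S, (∀ n, u n ∈ D) ∧ (∀ n, CC (u n) (u (n + 1))) ∧ IsLUB (Set.range u) s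

/-- `m` is the least upper bound of the functionals `l₁` and `l₂` in `F(S)`
(pointwise order). -/
def IsFSup {S : Type*} [AddCommMonoid S] [PartialOrder S] (l₁ l₂ m : S → ℝ≥0∞) : Prop :=
  IsFunctional m ∧ (∀ s, l₁ s ≤ m s) ∧ (∀ s, l₂ s ≤ m s) ∧
    ∀ d : S → ℝ≥0∞, IsFunctional d → (∀ s, l₁ s ≤ d s) → (∀ s, l₂ s ≤ d s) → ∀ s, m s ≤ d s

/-- `m` is the greatest lower bound of the functionals `l₁` and `l₂` in `F(S)`
(pointwise order). -/
def IsFInf {S : Type*} [AddCommMonoid S] [PartialOrder S] (l₁ l₂ m : S → ℝ≥0∞) : Prop :=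
  IsFunctional m ∧ (∀ s, m s ≤ l₁ s) ∧ (∀ s, m s ≤ l₂ s) ∧
    ∀ d : S → ℝ≥0∞, IsFunctional d → (∀ s, d s ≤ l₁ s) → (∀ s, d s ≤ l₂ s) → ∀ s, d s ≤ m s

/-- An isomorphism of ordered semigroups between `S` and the extended natural numbers. -/
def IsOrdSemigroupIso {S : Type*} [AddCommMonoid S] [PartialOrder S] (e : S ≃ ℕ∞) : Prop :=
  (∀ a b : S, e (a + b) = e a + e b) ∧ e 0 = 0 ∧ ∀ a b : S, a ≤ b ↔ e a ≤ e b

section CompactContainment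

variable {S : Type*} [AddCommMonoid S] [PartialOrder S]

theorem CC.le {s t : S} (h : CC s t) : s ≤ t := by
  obtain ⟨_, hn⟩ := h (fun _ => t) monotone_const t (by simp) le_rfl
  exact hn

theorem CC.trans_le {s t r : S} (h : CC s t) (htr : t ≤ r) : CC s r :=
  fun u hu x hx hr => h u hu x hx (htr.trans hr)

theorem CC.of_le {s t r : S} (hst : s ≤ t) (h : CC t r) : CC s r := fun u hu x hx hr =>
  let ⟨n, hn⟩ := h u hu x hx hr
  ⟨n, hst.trans hn⟩

theorem monotone_of_CC {u : ℕ → S} (hu : ∀ n, CC (u n) (u (n + 1))) : Monotone u :=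
  monotone_nat_of_le_succ fun n => (hu n).le

theorem CC.of_isLUB {u : ℕ → S} (hu : ∀ n, CC (u n) (u (n + 1))) {x : S}
    (hx : IsLUB (Set.range u) x) (n : ℕ) : CC (u n) x :=
  (hu n).trans_le (hx.1 ⟨n + 1, rfl⟩)

namespace CuO5

theorem isOrderedAddMonoid (hS : CuO5 S) : IsOrderedAddMonoid S where
  add_le_add_left _ _ h c := hS.addRightMono h c

theorem zero_CC (hS : CuO5 S) (t : S) : CC 0 t := fun u _ _ _ _ => ⟨0, hS.zeroLe (u 0)⟩

theorem nsmul_CC (hS : CuO5 S) {s t : S} (h : CC s t) (n : ℕ) : CC (n • s) (n • t) := by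
  induction n with
  | zero => simpa using hS.zero_CC (0 : S)
  | succ n ih => simpa only [succ_nsmul] using hS.O3 ih h

theorem exists_CC_between (hS : CuO5 S) {s t : S} (h : CC s t) : ∃ r, CC s r ∧ CC r t := by
  obtain ⟨u, hu, hx⟩ := hS.O2 t
  obtain ⟨n, hn⟩ := h u (monotone_of_CC hu) t hx le_rfl
  exact ⟨u (n + 1), .of_le hn (hu n), .of_isLUB hu hx _⟩

/-- Two elements compactly contained in `t` have a common upper bound compactly contained
in `t`. -/
theorem exists_CC_ub (hS : CuO5 S) {a b t : S} (ha : CC a t) (hb : CC b t) :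
    ∃ r, a ≤ r ∧ b ≤ r ∧ CC r t := by
  obtain ⟨u, hu, hx⟩ := hS.O2 t
  have hm := monotone_of_CC hu
  obtain ⟨n, hn⟩ := ha u hm t hx le_rfl
  obtain ⟨k, hk⟩ := hb u hm t hx le_rfl
  exact ⟨u (max n k), hn.trans (hm (le_max_left _ _)), hk.trans (hm (le_max_right _ _)),
    .of_isLUB hu hx _⟩

theorem exists_CC_le_add (hS : CuO5 S) {s t a b : S} (h : CC s t) (hab : t ≤ a + b) :
    ∃ b', CC b' b ∧ s ≤ a + b' := by
  obtain ⟨u, hu, hx⟩ := hS.O2 b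
  have hm := monotone_of_CC hu
  have := hS.isOrderedAddMonoid
  obtain ⟨n, hn⟩ := h (fun n => a + u n) (fun i j hij => add_le_add le_rfl (hm hij)) (a + b)
    (hS.O4 (fun _ => a) u monotone_const hm a b (by simp) hx) hab
  exact ⟨u n, .of_isLUB hu hx n, hn⟩

/-- Between `n • h'` and `n • h` one can fit `K' ≪ K` whose difference is at most `h`. -/
theorem exists_CC_near (hS : CuO5 S) (n : ℕ) {h' h : S} (hh : CC h' h) :
    ∃ K' K, n • h' ≤ K' ∧ CC K' K ∧ K ≤ n • h ∧ K ≤ K' + h := by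
  have := hS.isOrderedAddMonoid
  induction n generalizing h with
  | zero => exact ⟨0, 0, by simp, hS.zero_CC 0, by simp, by simpa using hS.zeroLe h⟩
  | succ n ih =>
    obtain ⟨r, hr, hrh⟩ := hS.exists_CC_between hh
    obtain ⟨K', K, h1, h2, h3, h4⟩ := ih hr
    refine ⟨K' + r, K + h, ?_, hS.O3 h2 hrh, ?_, add_le_add h4 le_rfl⟩
    · rw [succ_nsmul]
      exact add_le_add h1 hr.le
    · rw [succ_nsmul]
      exact add_le_add (h3.trans (nsmul_le_nsmul_right hrh.le n)) le_rfl

end CuO5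

namespace RealMul

theorem nsmul_smul (rm : RealMul S) {a : ℝ≥0∞} (ha : 0 < a) (s : S) (n : ℕ) :
    (n + 1) • rm.smul a s = rm.smul ((n + 1 : ℕ) * a) s := by
  induction n with
  | zero => simp
  | succ n ih =>
    rw [succ_nsmul, ih, ← rm.add_left (by simp [ha]) ha]
    congr 1
    push_cast
    ring

theorem smul_nsmul (rm : RealMul S) {a : ℝ≥0∞} (ha : 0 < a) (s : S) (n : ℕ) :
    rm.smul a ((n + 1) • s) = (n + 1) • rm.smul a s := by
  induction n with
  | zero => simp
  | succ n ih => rw [succ_nsmul, rm.add_right ha, ih, ← succ_nsmul]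

theorem nsmul_inv_smul (rm : RealMul S) (s : S) (n : ℕ) :
    (n + 1) • rm.smul ((n + 1 : ℕ) : ℝ≥0∞)⁻¹ s = s := by
  rw [rm.nsmul_smul (by simp [ENNReal.inv_pos]), ENNReal.mul_inv_cancel (by simp)
    (ENNReal.natCast_ne_top _), rm.one_smul]

theorem exists_nsmul_eq (rm : RealMul S) (s : S) {n : ℕ} (hn : 0 < n) : ∃ r, n • r = s := by
  obtain ⟨n, rfl⟩ := Nat.exists_eq_succ_of_ne_zero hn.ne'
  exact ⟨_, rm.nsmul_inv_smul s n⟩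

theorem le_of_nsmul_le (rm : RealMul S) {s t : S} {n : ℕ} (hn : 0 < n) (h : n • s ≤ n • t) :
    s ≤ t := by
  obtain ⟨n, rfl⟩ := Nat.exists_eq_succ_of_ne_zero hn.ne'
  have hpos : 0 < ((n + 1 : ℕ) : ℝ≥0∞)⁻¹ := ENNReal.inv_pos.2 (ENNReal.natCast_ne_top _)
  simpa only [Nat.succ_eq_add_one, rm.smul_nsmul hpos, rm.nsmul_inv_smul]
    using rm.mono_right hpos h

theorem nsmul_div_smul (rm : RealMul S) (s : S) (n : ℕ) :
    (n + 2) • rm.smul (1 - ((n + 2 : ℕ) : ℝ≥0∞)⁻¹) s = (n + 1) • s := by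
  have hlt : ((n + 2 : ℕ) : ℝ≥0∞)⁻¹ < 1 := ENNReal.inv_lt_one.2 (by norm_cast; omega)
  rw [rm.nsmul_smul (tsub_pos_of_lt hlt) s (n + 1), ENNReal.mul_sub (by simp),
    ENNReal.mul_inv_cancel (by simp) (ENNReal.natCast_ne_top _)]
  conv_rhs => rw [← rm.one_smul s, rm.nsmul_smul one_pos]
  congr 1
  rw [mul_one, mul_one, Nat.cast_add (n + 1) 1, Nat.cast_one]
  exact ENNReal.add_sub_cancel_right ENNReal.one_ne_top

theorem monotone_one_sub_inv : Monotone fun n : ℕ => 1 - ((n + 2 : ℕ) : ℝ≥0∞)⁻¹ :=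
  fun i j hij => tsub_le_tsub_left (ENNReal.inv_le_inv.2 (by exact_mod_cast by omega)) 1

theorem iSup_one_sub_inv : ⨆ n : ℕ, (1 - ((n + 2 : ℕ) : ℝ≥0∞)⁻¹) = 1 := by
  have h := ENNReal.tendsto_inv_nat_nhds_zero.comp (Filter.tendsto_add_atTop_nat 2)
  have h2 := ENNReal.Tendsto.sub (tendsto_const_nhds (x := (1 : ℝ≥0∞))) h
    (Or.inl ENNReal.one_ne_top)
  rw [tsub_zero] at h2
  exact tendsto_nhds_unique (tendsto_atTop_iSup monotone_one_sub_inv) h2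

theorem isLUB_one_sub_inv (rm : RealMul S) (s : S) :
    IsLUB (Set.range fun n : ℕ => rm.smul (1 - ((n + 2 : ℕ) : ℝ≥0∞)⁻¹) s) s := by
  have h := rm.sup_left _ monotone_one_sub_inv
    (tsub_pos_of_lt (ENNReal.inv_lt_one.2 (by norm_num))) s
  rwa [iSup_one_sub_inv, rm.one_smul] at h

theorem le_of_forall_nsmul_le (rm : RealMul S) {s t : S}
    (h : ∀ n : ℕ, (n + 1) • s ≤ (n + 2) • t) : s ≤ t := by
  refine (rm.isLUB_one_sub_inv s).2 ?_
  rintro _ ⟨n, rfl⟩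
  refine rm.le_of_nsmul_le (n := n + 2) (by omega) ?_
  simpa only [rm.nsmul_div_smul] using h n

theorem le_of_add_le_add (rm : RealMul S) (hS : CuO5 S) {s t r : S} (N : ℕ)
    (h : s + r ≤ t + r) (hr : r ≤ N • t) : s ≤ t := by
  have := hS.isOrderedAddMonoid
  have key (k : ℕ) : k • s + r ≤ k • t + r := by
    induction k with
    | zero => simp
    | succ k ih =>
      calc (k + 1) • s + r = k • s + (s + r) := by rw [succ_nsmul]; abel
        _ ≤ k • s + (t + r) := add_le_add le_rfl h
        _ = (k • s + r) + t := by abel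
        _ ≤ (k • t + r) + t := add_le_add ih le_rfl
        _ = (k + 1) • t + r := by rw [succ_nsmul]; abel
  refine rm.le_of_forall_nsmul_le fun n => rm.le_of_nsmul_le N.succ_pos ?_
  calc (N + 1) • (n + 1) • s = ((N + 1) * (n + 1)) • s := (mul_nsmul' ..).symm
    _ ≤ ((N + 1) * (n + 1)) • s + r := le_add_of_nonneg_right (hS.zeroLe r)
    _ ≤ ((N + 1) * (n + 1)) • t + N • t := (key _).trans (add_le_add le_rfl hr)
    _ ≤ ((N + 1) * (n + 1)) • t + N • t + t := le_add_of_nonneg_right (hS.zeroLe t)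
    _ = (N + 1) • (n + 2) • t := by
      rw [← mul_nsmul', add_assoc, ← succ_nsmul, ← add_nsmul]
      congr 1

theorem exists_forall_add_nsmul_le (rm : RealMul S) (hS : CuO5 S) {s t : S} (h : CC s t)
    (c : ℕ) : ∃ n₀, ∀ n ≥ n₀, (n + c) • s ≤ n • t := by
  have := hS.isOrderedAddMonoid
  obtain ⟨m, hm⟩ := h _
    (fun i j hij => rm.mono_left
      (tsub_pos_of_lt (ENNReal.inv_lt_one.2 (by norm_cast; omega)))
      (monotone_one_sub_inv hij) t) t (rm.isLUB_one_sub_inv t) le_rfl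
  have hm' : (m + 2) • s ≤ (m + 1) • t := by
    simpa only [rm.nsmul_div_smul] using nsmul_le_nsmul_right hm (m + 2)
  refine ⟨c * (m + 1), fun n hn => ?_⟩
  obtain ⟨k, rfl⟩ := Nat.exists_eq_add_of_le hn
  calc (c * (m + 1) + k + c) • s = c • (m + 2) • s + k • s := by
        rw [← mul_nsmul', ← add_nsmul]; congr 1; ring
    _ ≤ c • (m + 1) • t + k • t :=
        add_le_add (nsmul_le_nsmul_right hm' c) (nsmul_le_nsmul_right h.le k)
    _ = (c * (m + 1) + k) • t := by rw [← mul_nsmul', ← add_nsmul]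

end RealMul

namespace CuO6

theorem exists_le_add_between (hS : CuO6 S) (rm : RealMul S) {h₁' h₁ h₂' h₂ f : S}
    (hh₁ : CC h₁' h₁) (hh₂ : CC h₂' h₂) (hf₁ : h₁ ≤ f) (hf₂ : h₂ ≤ f) :
    ∃ r, r ≤ f ∧ r ≤ h₁ + h₂ ∧ h₁' ≤ r ∧ h₂' ≤ r := by
  have hS5 := hS.toCuO5
  have := hS5.isOrderedAddMonoid
  obtain ⟨k₁, hk₁', hk₁⟩ := hS5.exists_CC_between hh₁
  obtain ⟨k₂, hk₂', hk₂⟩ := hS5.exists_CC_between hh₂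
  obtain ⟨n₁, hn₁⟩ := rm.exists_forall_add_nsmul_le hS5 hk₁' 1
  obtain ⟨n₂, hn₂⟩ := rm.exists_forall_add_nsmul_le hS5 hk₂' 1
  set n := max n₁ n₂
  specialize hn₁ n (le_max_left _ _)
  specialize hn₂ n (le_max_right _ _)
  obtain ⟨K', K, hK', hKK, hKn, hKh⟩ := hS5.exists_CC_near n hk₁
  obtain ⟨x, hx, hx'⟩ := hS.O5 hKK (hKn.trans (nsmul_le_nsmul_right hf₁ n))
  obtain ⟨a, b, hab, haK, -, hbx, hbh⟩ :=
    hS.O6 ((nsmul_le_nsmul_right hf₂ n).trans hx') (hS5.nsmul_CC hk₂ n)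
  obtain ⟨r, hr⟩ := rm.exists_nsmul_eq (K' + b + h₁) n.succ_pos
  refine ⟨r, ?_, ?_, ?_, ?_⟩ <;> refine rm.le_of_nsmul_le n.succ_pos ?_ <;>
    simp only [Nat.succ_eq_add_one] at hr ⊢ <;> rw [hr]
  · rw [succ_nsmul]
    exact add_le_add ((add_le_add le_rfl hbx).trans hx) hf₁
  · rw [succ_nsmul, nsmul_add]
    exact add_le_add (add_le_add (hKK.le.trans hKn) hbh)
      (le_add_of_nonneg_right (hS.zeroLe h₂))
  · rw [add_assoc]
    exact (hn₁.trans hK').trans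
      (le_add_of_nonneg_right (add_nonneg (hS.zeroLe b) (hS.zeroLe h₁)))
  · calc (n + 1) • h₂' ≤ a + b := hn₂.trans hab
      _ ≤ K' + h₁ + b := add_le_add (haK.trans hKh) le_rfl
      _ = K' + b + h₁ := add_right_comm ..

/-- Interpolation up to an additive error `w`, which is negligible as `n` grows. -/
theorem exists_between_add_error (hS : CuO6 S) (rm : RealMul S) {h₁' h₁ h₂' h₂ f g w : S}
    (hh₁ : CC h₁' h₁) (hh₂ : CC h₂' h₂) (hf₁ : h₁ ≤ f) (hf₂ : h₂ ≤ f) (hg₁ : h₁ ≤ g)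
    (hg₂ : h₂ ≤ g) (hfw : f ≤ w) (n : ℕ) :
    ∃ h, h ≤ n • f ∧ h ≤ n • g + w ∧ n • h₁' ≤ h + 2 • w ∧ n • h₂' ≤ h + 2 • w := by
  have hS5 := hS.toCuO5
  have := hS5.isOrderedAddMonoid
  have hw2 : 0 ≤ 2 • w := hS.zeroLe _
  obtain ⟨k₁, hk₁', hk₁⟩ := hS5.exists_CC_between hh₁
  obtain ⟨k₂, hk₂', hk₂⟩ := hS5.exists_CC_between hh₂
  obtain ⟨f', hf₁', hf₂', hff⟩ := hS5.exists_CC_ub (hk₁.trans_le hf₁) (hk₂.trans_le hf₂)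
  obtain ⟨F', F, hfF', hFF, hFf, hFF'⟩ := hS5.exists_CC_near n hff
  obtain ⟨H', H, hH', hHH, hHk, hHH'⟩ := hS5.exists_CC_near n hk₁'
  have hFw : F ≤ F' + w := hFF'.trans (add_le_add le_rfl hfw)
  have hHw : H ≤ H' + w := hHH'.trans (add_le_add le_rfl (hk₁.le.trans (hf₁.trans hfw)))
  have hkF {k : S} (hk : k ≤ f') : n • k ≤ F :=
    (nsmul_le_nsmul_right hk n).trans (hfF'.trans hFF.le)
  obtain ⟨x, hx, hx'⟩ := hS.O5 hHH (hHk.trans (hkF hf₁'))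
  obtain ⟨y, hy, hy'⟩ := hS.O5 (hS5.nsmul_CC hk₂' n) (hkF hf₂')
  obtain ⟨p, hp, hp'⟩ := hS.O5 hHH (hHk.trans (nsmul_le_nsmul_right (hk₁.le.trans hg₁) n))
  have hxyp : x ≤ y + (p + w) := by
    refine rm.le_of_add_le_add hS5 (r := H') n ?_ ?_
    · calc x + H' = H' + x := add_comm ..
        _ ≤ n • k₂ + y := hx.trans hy'
        _ ≤ n • g + y := add_le_add (nsmul_le_nsmul_right (hk₂.le.trans hg₂) n) le_rfl
        _ ≤ (H' + w + p) + y := add_le_add (hp'.trans (add_le_add hHw le_rfl)) le_rfl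
        _ = y + (p + w) + H' := by abel
    · refine (hHH.le.trans hHk).trans (nsmul_le_nsmul_right ?_ n)
      calc k₁ ≤ w := hk₁.le.trans (hf₁.trans hfw)
        _ ≤ y + p + w := le_add_of_nonneg_left (hS.zeroLe _)
        _ = y + (p + w) := add_assoc ..
  obtain ⟨x', hx'x, hFx'⟩ := hS5.exists_CC_le_add hFF hx'
  obtain ⟨u, v, huv, huy, hux, hvp, hvx⟩ := hS.O6 hxyp hx'x
  refine ⟨H' + v, ?_, ?_, ?_, ?_⟩
  · exact ((add_le_add le_rfl hvx).trans hx).trans hFf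
  · calc H' + v ≤ H' + (p + w) := add_le_add le_rfl hvp
      _ = H' + p + w := (add_assoc ..).symm
      _ ≤ n • g + w := add_le_add hp le_rfl
  · rw [add_assoc]
    exact hH'.trans (le_add_of_nonneg_right (add_nonneg (hS.zeroLe v) hw2))
  · refine rm.le_of_add_le_add hS5 (r := u) n ?_ ?_
    · calc n • h₂' + u ≤ F := (add_le_add le_rfl huy).trans hy
        _ ≤ (H + x') + w := hFw.trans (add_le_add hFx' le_rfl)
        _ ≤ (H' + w + (u + v)) + w := add_le_add (add_le_add hHw huv) le_rfl
        _ = H' + v + 2 • w + u := by rw [two_nsmul]; abel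
    · have hxF : x ≤ F := (le_add_of_nonneg_left (hS.zeroLe H')).trans hx
      refine (hux.trans (hxF.trans hFf)).trans (nsmul_le_nsmul_right (hfw.trans ?_) n)
      rw [two_nsmul, ← add_assoc]
      exact le_add_of_nonneg_left (hS.zeroLe _)

theorem exists_between (hS : CuO6 S) (rm : RealMul S) {h₁' h₁ h₂' h₂ f g : S}
    (hh₁ : CC h₁' h₁) (hh₂ : CC h₂' h₂) (hf₁ : h₁ ≤ f) (hf₂ : h₂ ≤ f) (hg₁ : h₁ ≤ g)
    (hg₂ : h₂ ≤ g) : ∃ h, h ≤ f ∧ h ≤ g ∧ h₁' ≤ h ∧ h₂' ≤ h := by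
  have hS5 := hS.toCuO5
  have := hS5.isOrderedAddMonoid
  obtain ⟨l₁, hl₁, hl₁'⟩ := hS5.exists_CC_between hh₁
  obtain ⟨l₂, hl₂, hl₂'⟩ := hS5.exists_CC_between hh₂
  obtain ⟨k₁, hk₁, hk₁'⟩ := hS5.exists_CC_between hl₁
  obtain ⟨k₂, hk₂, hk₂'⟩ := hS5.exists_CC_between hl₂
  obtain ⟨r, hrf, hrw, hr₁, hr₂⟩ := hS.exists_le_add_between rm hl₁' hl₂' hf₁ hf₂
  obtain ⟨n₁, hn₁⟩ := rm.exists_forall_add_nsmul_le hS5 hk₁ 6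
  obtain ⟨n₂, hn₂⟩ := rm.exists_forall_add_nsmul_le hS5 hk₂ 6
  set n := max n₁ n₂
  specialize hn₁ n (le_max_left _ _)
  specialize hn₂ n (le_max_right _ _)
  obtain ⟨h, hhf, hhg, hl, hr⟩ := hS.exists_between_add_error rm hk₁' hk₂' hr₁ hr₂
    (hl₁'.le.trans hg₁) (hl₂'.le.trans hg₂) hrw n
  have hw {t : S} (h₁t : h₁ ≤ t) (h₂t : h₂ ≤ t) : h₁ + h₂ ≤ 2 • t := by
    rw [two_nsmul]
    exact add_le_add h₁t h₂t
  obtain ⟨m, hm⟩ := rm.exists_nsmul_eq (h + 2 • (h₁ + h₂)) (n := n + 6) (by omega)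
  refine ⟨m, ?_, ?_, ?_, ?_⟩ <;>
    refine rm.le_of_nsmul_le (n := n + 6) (by omega) ?_ <;> rw [hm]
  · calc h + 2 • (h₁ + h₂) ≤ n • f + 2 • 2 • f :=
          add_le_add (hhf.trans (nsmul_le_nsmul_right hrf n))
            (nsmul_le_nsmul_right (hw hf₁ hf₂) 2)
      _ = (n + 4) • f := by rw [← mul_nsmul', ← add_nsmul]
      _ ≤ (n + 6) • f := nsmul_le_nsmul_left (hS.zeroLe f) (by omega)
  · calc h + 2 • (h₁ + h₂) ≤ (n • g + 2 • g) + 2 • 2 • g :=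
          add_le_add (hhg.trans (add_le_add le_rfl (hw hg₁ hg₂)))
            (nsmul_le_nsmul_right (hw hg₁ hg₂) 2)
      _ = (n + 6) • g := by rw [← mul_nsmul', ← add_nsmul, ← add_nsmul]
  · exact hn₁.trans hl
  · exact hn₂.trans hr

end CuO6

end CompactContainment

/-- existence of greatest lower bounds. -/
theorem exists_inf {S : Type*} [AddCommMonoid S] [PartialOrder S]
    (hS : CuO6 S) (rm : RealMul S) (hd : ∃ D : Set S, D.Countable ∧ IsDenseSub D)
    (f g : S) :
    ∃ m : S, IsGLB ({f, g} : Set S) m := by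
  obtain ⟨D, hDc, hD⟩ := hd
  have hS5 := hS.toCuO5
  let A : Set S := {d | d ∈ D ∧ ∃ h, h ≤ f ∧ h ≤ g ∧ CC d h}
  have hAc : A.Countable := hDc.mono fun _ h => h.1
  have hdir : Directed (· ≤ ·) (Subtype.val : A → S) := by
    rintro ⟨a, _, s, hsf, hsg, has⟩ ⟨b, _, t, htf, htg, hbt⟩
    obtain ⟨a', haa', has'⟩ := hS5.exists_CC_between has
    obtain ⟨b', hbb', hbt'⟩ := hS5.exists_CC_between hbt
    obtain ⟨h, hf, hg, ha, hb⟩ := hS.exists_between rm has' hbt' hsf htf hsg htg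
    obtain ⟨u, huD, hu, hx⟩ := hD h
    have hm := monotone_of_CC hu
    obtain ⟨i, hi⟩ := (haa'.trans_le ha) u hm h hx le_rfl
    obtain ⟨j, hj⟩ := (hbb'.trans_le hb) u hm h hx le_rfl
    exact ⟨⟨u (max i j), huD _, h, hf, hg, .of_isLUB hu hx _⟩,
      hi.trans (hm (le_max_left _ _)), hj.trans (hm (le_max_right _ _))⟩
  have hne : Nonempty A := by
    obtain ⟨u, huD, hu, hx⟩ := hD 0
    exact ⟨⟨u 0, huD 0, 0, hS.zeroLe f, hS.zeroLe g, .of_isLUB hu hx 0⟩⟩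
  have : Encodable A := hAc.toEncodable
  have : Inhabited A := Classical.inhabited_of_nonempty hne
  obtain ⟨m, hm⟩ := hS.O1 (fun n => (hdir.sequence Subtype.val n).1) hdir.sequence_mono
  refine ⟨m, ?_, fun z hz => ?_⟩
  · have hle (a : A) : (a : S) ≤ f ∧ (a : S) ≤ g := by
      obtain ⟨a, _, h, hf, hg, hah⟩ := a
      exact ⟨hah.le.trans hf, hah.le.trans hg⟩
    rintro t (rfl | rfl) <;> refine hm.2 ?_ <;> rintro _ ⟨n, rfl⟩
    · exact (hle _).1
    · exact (hle _).2
  · obtain ⟨u, huD, hu, hx⟩ := hD z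
    refine hx.2 ?_
    rintro _ ⟨n, rfl⟩
    have hA : u n ∈ A := ⟨huD n, z, hz (by simp), hz (by simp), .of_isLUB hu hx n⟩
    exact (hdir.le_sequence ⟨u n, hA⟩).trans (hm.1 ⟨_, rfl⟩)
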